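/- Divided powers of X_n^+ on the Schur basis: for all r ≥ 1, n, m ∈ ℤ, i ∈ {0,1} and every partition μ = (μ₁,…,μ_l), the following holds in W_i: X_n^{+(r)} (s_μ e^{mα}e^{iα/2}) = q^{−3r(r−1)/2 − r(n+1+2m+i)} · ∑_λ q^{−2|λ|} · s_λ · s_{(ν(λ), μ)} · e^{(m+r)α}e^{iα/2}, where the sum is over all partitions λ = (λ₁,…,λ_r) with at most r parts (all but finitely many terms are zero), ν(λ) := (−λ_k − 2(r−k) − (n+1+2m+i))_{k=1,…,r}, and (ν(λ), μ) ∈ ℤ^{r+l} is the juxtaposed tuple. -/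

import Mathlib

/-!
Write `N = n+1+2m+i`, and let `B_b = ∑_j (-1)^j h_{b+j} e_j^⊥` be the Bernstein operators.
The annihilation half of `X^+(z)` is, by Taylor's formula, the translation
`p_k ↦ p_k - q^{-k}z^{-k}`, and its creation half is the product of the generating series of the
`h_k` at `q⁻¹z` and at `qz`. Hence `X_n^+` acts on the component `e^{mα}e^{iα/2}` as
`∑_a q^{-N-2a} h_a B_{-N-a}`. Two properties of the Bernstein operators are used:
`B_b (h_a P) = h_a B_b P - h_{a-1} B_{b+1} P`, and `B_b` maps the determinant
`D(y) = det(h_{j-y_i})`, which is alternating in `y`, to `D(-b, y+1)`.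

Let `K_r(s; y) = ∑_{a ∈ ℤ^r} q^{-2|a|} h_{a_1}⋯h_{a_r} D(a+s, y)`, a finite sum which is again
alternating in `s`, and let `δ_r(M) = (M, M-1, …, M-r+1)`. By induction on `r`, the power
`(X_n^+)^r` sends `D(y)` to `q^{-3r(r-1)/2-rN} [r]! K_r(δ_r(N+2r-2); y+r)`. In the induction step
set `M = N+2r`. Moving `B` past `h_{a_1}⋯h_{a_r}` produces `q^{-M}` times the sum over all subsets
`I` of `{1,…,r}` of `(-q^{-2})^{|I|} K_{r+1}((M-|I|, δ_r(M-2)+1+1_I); y+r+1)`. If `I` is not an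
initial segment, the argument has a repeated entry and the term vanishes; if `I` is the initial
segment of length `k`, the argument is `δ_{r+1}(M)` rearranged by a `(k+1)`-cycle, which gives the
sign `(-1)^k`. The total factor is `∑_{k=0}^r q^{-2k} = q^{-r}[r+1]`.

Finally, the terms of `K_r(δ_r(M); y)` vanish unless `a + δ_r(M)` has distinct entries, i.e. is
a rearrangement of `λ + δ_r(M)` for a unique weakly decreasing `λ`. Summing over the rearrangements
with their signs turns the products of the `h`'s into the Jacobi–Trudi determinant `s_λ`, which
vanishes when `λ` has a negative entry.
-/

open MvPolynomial

noncomputable section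

/-- The base field `F = ℚ(q)`. -/
abbrev Fq : Type := RatFunc ℚ

/-- The indeterminate `q ∈ ℚ(q)`. -/
def qq : Fq := RatFunc.X

/-- `Λ_F = F[p₁,p₂,…]`, with the variable `X n` (for `n : ℕ+`) the power sum `p_n`. -/
abbrev LamF : Type := MvPolynomial ℕ+ Fq

/-- The power sum `p_n`. -/
def ppF (n : ℕ+) : LamF := X n

/-- The family `g` with generating function `∑_k g_k t^k = exp (∑_{n≥1} c n · p_n tⁿ/n)`,
characterized by `g 0 = 1` and the recursion obtained by differentiating:
`(k+1) · g (k+1) = ∑_{i=0}^{k} c (i+1) · p_{i+1} · g (k−i)`. -/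
def genFamF (c : ℕ → Fq) : ℕ → LamF
  | 0 => 1
  | (k+1) => (((k : Fq) + 1)⁻¹) •
      ∑ i ∈ Finset.range (k+1), c (i+1) • (ppF ⟨i+1, Nat.succ_pos i⟩ * genFamF c (k - i))
  decreasing_by exact Nat.lt_succ_of_le (Nat.sub_le k i)

/-- The complete homogeneous symmetric function `h_k`. -/
def hhF : ℕ → LamF := genFamF fun _ => 1

/-- The elementary symmetric function `e_k`. -/
def eeF : ℕ → LamF := genFamF fun n => (-1)^(n+1)

/-- `h` indexed by `ℤ` (zero in negative degrees). -/
def hZF (n : ℤ) : LamF := if 0 ≤ n then hhF n.toNat else 0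

/-- `e` indexed by `ℤ` (zero in negative degrees). -/
def eZF (n : ℤ) : LamF := if 0 ≤ n then eeF n.toNat else 0

/-- The creation coefficients of `X⁺(z)`:
`exp (∑ ((1+q^{2n})q^{−n}/n)·p_n·zⁿ) = ∑_k HpF k · z^k`. -/
def HpF : ℕ → LamF := genFamF fun n => (1 + qq ^ (2*n)) * (qq⁻¹) ^ n

/-- `HpF` indexed by `ℤ`. -/
def HZp (n : ℤ) : LamF := if 0 ≤ n then HpF n.toNat else 0

/-- The annihilation avatars for `X⁺(z)`: since
`(1+q^{2n})q^{−n}/n · a_n = q^{−n}·∂/∂p_n`, the coefficient of `z^{−j}` in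
`exp (−∑ ((1+q^{2n})q^{−n}/n)·a_n·z^{−n})` is `ApF j` with `p_i ↦ i·∂/∂p_i`
substituted, where `∑_k ApF k t^k = exp (−∑ q^{−n} p_n tⁿ/n)`. -/
def ApF : ℕ → LamF := genFamF fun n => -((qq⁻¹) ^ n)

/-- The creation coefficients of `X⁻(z)`:
`exp (−∑ ((1+q^{2n})/n)·p_n·zⁿ) = ∑_k HmF k · z^k`. -/
def HmF : ℕ → LamF := genFamF fun n => -(1 + qq ^ (2*n))

/-- `HmF` indexed by `ℤ`. -/
def HZm (n : ℤ) : LamF := if 0 ≤ n then HmF n.toNat else 0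

/-- The differential operator `∏_i (i·∂/∂p_i)^(α i)`. -/
def monOpF (α : ℕ+ →₀ ℕ) : Module.End Fq LamF :=
  ((α.support.sort (· ≤ ·)).map fun (i : ℕ+) =>
    (((i : ℕ) : Fq) • (pderiv i).toLinearMap) ^ (α i)).prod

/-- `f(∂) P`: substitute `p_i ↦ i·∂/∂p_i` in `f` and apply to `P`. -/
def DopF (f : LamF) (P : LamF) : LamF := ∑ α ∈ f.support, f.coeff α • monOpF α P

/-- Bound for the weighted degree of `P` (weight of `p_i` is `i`). -/
def wboundF (P : LamF) : ℕ := P.support.sup fun α => α.sum fun i k => (i : ℕ) * k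

/-- The level-one Fock space `W_i = Λ_F ⊗ F[ℤα]e^{iα/2}`, realized as `ℤ →₀ Λ_F`;
`Finsupp.single m P` represents `P·e^{mα}e^{iα/2}`. -/
abbrev W : Type := ℤ →₀ LamF

/-- The Drinfeld current component `X_n^+` on `W_i` (the parameter `i ∈ {0,1}` enters
through `z^∂ e^{mα}e^{iα/2} = z^{2m+i} e^{mα}e^{iα/2}`): the coefficient of `z^{−n−1}` in
`X⁺(z) = exp(∑((1+q^{2n})q^{−n}/n)a_{−n}zⁿ)·exp(−∑((1+q^{2n})q^{−n}/n)a_n z^{−n})·e^α z^∂`,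
i.e. `X_n^+(P·e^{mα}) = ∑_j HpF_{j−n−1−2m−i} · (ApF j)(∂) P · e^{(m+1)α}`
(only the finitely many `j ≤ wboundF P` contribute). -/
def Xp (i n : ℤ) (w : W) : W :=
  w.sum fun m P => Finsupp.single (m+1)
    (∑ j ∈ Finset.range (wboundF P + 1),
      HZp ((j : ℤ) - n - 1 - 2*m - i) * DopF (ApF j) P)

/-- The Drinfeld current component `X_n^-` on `W_i`: the coefficient of `z^{−n−1}` in
`X⁻(z) = exp(−∑((1+q^{2n})/n)a_{−n}zⁿ)·exp(∑((1+q^{2n})/n)a_n z^{−n})·e^{−α} z^{−∂}`,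
i.e. `X_n^-(P·e^{mα}) = ∑_j HmF_{j+2m+i−n−1} · h_j(∂) P · e^{(m−1)α}`
(here `(1+q^{2n})/n · a_n = ∂/∂p_n`, whose generating family is `h`). -/
def Xm (i n : ℤ) (w : W) : W :=
  w.sum fun m P => Finsupp.single (m-1)
    (∑ j ∈ Finset.range (wboundF P + 1),
      HZm ((j : ℤ) + 2*m + i - n - 1) * DopF (hhF j) P)

/-- The `q`-factorial `[r]! = ∏_{k=1}^r (q^k − q^{−k})/(q − q^{−1})`. -/
def qfact (r : ℕ) : Fq := ∏ k ∈ Finset.range r, (qq ^ (k+1) - (qq⁻¹) ^ (k+1)) / (qq - qq⁻¹)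

/-- The divided power `x^{(r)} = x^r / [r]!` of an operator on `W`. -/
def divpow (f : W → W) (r : ℕ) (w : W) : W := (qfact r)⁻¹ • (f^[r] w)

/-- Schur function of an integer tuple: `s_ρ = det (h_{ρ_i − i + j})`. -/
def schurF {l : ℕ} (ρ : Fin l → ℤ) : LamF :=
  (Matrix.of fun i j : Fin l => hZF (ρ i - (i.1 : ℤ) + (j.1 : ℤ))).det

/-- Dual Schur function of an integer tuple: `s_{ρ'} = det (e_{ρ_i − i + j})`. -/
def schurEF {l : ℕ} (ρ : Fin l → ℤ) : LamF :=
  (Matrix.of fun i j : Fin l => eZF (ρ i - (i.1 : ℤ) + (j.1 : ℤ))).det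

/-- `q^{±∂}`: `q^{ε∂}(P·e^{mα}e^{iα/2}) = q^{ε(2m+i)}·P·e^{mα}e^{iα/2}`. -/
def qd (i ε : ℤ) (w : W) : W := w.sum fun m P => Finsupp.single m (qq ^ (ε * (2*m + i)) • P)

/-- The Chevalley generator `e₁ = X₀⁺`. -/
def che1 (i : ℤ) : W → W := Xp i 0
/-- The Chevalley generator `f₁ = X₀⁻`. -/
def chf1 (i : ℤ) : W → W := Xm i 0
/-- The Chevalley generator `e₀ = X₁⁻ ∘ q^{−∂}`. -/
def che0 (i : ℤ) (w : W) : W := Xm i 1 (qd i (-1) w)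
/-- The Chevalley generator `f₀ = q^∂ ∘ X₋₁⁺`. -/
def chf0 (i : ℤ) (w : W) : W := qd i 1 (Xp i (-1) w)

section Alternating

/-- A function of families indexed by `ι` is alternating if permuting its argument multiplies its
value by the sign of the permutation. -/
def IsAlternating {ι α M : Type*} [Fintype ι] [DecidableEq ι] [AddCommGroup M]
    (f : (ι → α) → M) : Prop :=
  ∀ (σ : Equiv.Perm ι) (x : ι → α), f (x ∘ σ) = Equiv.Perm.sign σ • f x

variable {α M : Type*} [AddCommGroup M] {r : ℕ}

theorem IsAlternating.eq_zero_of_not_injective {ι : Type*} [Fintype ι] [DecidableEq ι]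
    [IsAddTorsionFree M] {f : (ι → α) → M} (hf : IsAlternating f) {x : ι → α}
    (hx : ¬ Function.Injective x) : f x = 0 := by
  obtain ⟨i, j, hxij, hij⟩ := Function.not_injective_iff.mp hx
  have hswap : x ∘ Equiv.swap i j = x := by
    rw [Equiv.comp_swap_eq_update, hxij, Function.update_eq_self, ← hxij, Function.update_eq_self]
  have h := hf (Equiv.swap i j) x
  rw [hswap, Equiv.Perm.sign_swap hij, Units.neg_smul, one_smul] at h
  exact self_eq_neg.mp h

theorem IsAlternating.append_right {l : ℕ} {f : (Fin (r + l) → α) → M} (hf : IsAlternating f)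
    (y : Fin l → α) : IsAlternating fun x : Fin r → α => f (Fin.append x y) := by
  intro σ x
  have h : Fin.append (x ∘ σ) y =
      Fin.append x y ∘ finSumFinEquiv.permCongr (σ.sumCongr (Equiv.refl (Fin l))) := by
    funext k
    refine Fin.addCases (fun k => ?_) (fun k => ?_) k <;> simp [Equiv.permCongr_apply]
  change f (Fin.append (x ∘ σ) y) = _
  rw [h, hf, Equiv.Perm.sign_permCongr, Equiv.Perm.sign_sumCongr, Equiv.Perm.sign_refl, mul_one]

theorem injective_strictAnti_comp_perm [LinearOrder α] :
    Function.Injective fun p : {x : Fin r → α // StrictAnti x} × Equiv.Perm (Fin r) =>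
      p.1.1 ∘ p.2 := by
  rintro ⟨⟨x, hx⟩, σ⟩ ⟨⟨y, hy⟩, τ⟩ h
  have hxy : x ∘ (σ * τ⁻¹ : Equiv.Perm (Fin r)) = y := by
    funext k
    simpa using congrFun h (τ⁻¹ k)
  have hyx : y = x := by
    have := Tuple.unique_antitone (f := x) (σ := σ * τ⁻¹) (τ := 1)
      (hxy ▸ hy.antitone) hx.antitone
    rwa [hxy] at this
  subst hyx
  exact Prod.ext rfl (Equiv.ext fun k => hx.injective (congrFun h k))

theorem range_strictAnti_comp_perm [LinearOrder α] :
    (Set.range fun p : {x : Fin r → α // StrictAnti x} × Equiv.Perm (Fin r) => p.1.1 ∘ p.2) =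
      {x | Function.Injective x} := by
  ext x
  refine ⟨?_, fun hx => ?_⟩
  · rintro ⟨⟨y, σ⟩, rfl⟩
    exact y.2.injective.comp σ.injective
  · have hanti : Antitone (x ∘ Tuple.sort (OrderDual.toDual ∘ x)) :=
      Tuple.monotone_sort (OrderDual.toDual ∘ x)
    refine ⟨(⟨_, hanti.strictAnti_of_injective (hx.comp (Equiv.injective _))⟩,
      (Tuple.sort (OrderDual.toDual ∘ x))⁻¹), ?_⟩
    funext k
    simp

theorem IsAlternating.finsum_smul_eq [LinearOrder α] [IsAddTorsionFree M] {R : Type*} [Ring R]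
    [Module R M] {f : (Fin r → α) → M} (hf : IsAlternating f) {w : (Fin r → α) → R}
    (hfin : (fun x => w x • f x).HasFiniteSupport) :
    ∑ᶠ x, w x • f x = ∑ᶠ (x : Fin r → α) (_ : StrictAnti x),
      (∑ σ : Equiv.Perm (Fin r), Equiv.Perm.sign σ • w (x ∘ σ)) • f x := by
  have hsupp : Function.support (fun x => w x • f x) ⊆ {x | Function.Injective x} := by
    intro x hx
    by_contra hinj
    exact hx (by simp [hf.eq_zero_of_not_injective hinj])
  rw [← finsum_mem_univ, finsum_mem_inter_support_eq' _ Set.univ {x | Function.Injective x}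
      fun x hx => iff_of_true (Set.mem_univ x) (hsupp hx), ← range_strictAnti_comp_perm,
    finsum_mem_range injective_strictAnti_comp_perm,
    finsum_curry _ (hfin.preimage injective_strictAnti_comp_perm.injOn),
    ← finsum_subtype_eq_finsum_cond]
  refine finsum_congr fun x => ?_
  rw [finsum_eq_sum_of_fintype, Finset.sum_smul]
  refine Finset.sum_congr rfl fun σ _ => ?_
  change w (x.1 ∘ σ) • f (x.1 ∘ σ) = _
  rw [hf, smul_assoc, smul_comm]

/-- The decreasing staircase `(M, M - 1, …, M - r + 1)`. -/
def stair (M : ℤ) : Fin r → ℤ := fun k => M - k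

theorem strictAnti_iff_antitone_sub_stair {d : Fin r → ℤ} (M : ℤ) :
    StrictAnti d ↔ Antitone (d - stair M) := by
  cases r with
  | zero => simp [StrictAnti, Antitone]
  | succ r =>
    rw [Fin.strictAnti_iff_succ_lt, Fin.antitone_iff_succ_le]
    refine forall_congr' fun k => ?_
    simp only [Pi.sub_apply, stair, Fin.val_succ, Fin.val_castSucc]
    omega

/-- The argument `(M - |I|, s + 1 + 1_I)` that arises when a new coordinate `M` is moved past the
coordinates of `s` and exchanges a unit with those in `I`. -/
def consExchange (M : ℤ) (s : Fin r → ℤ) (I : Finset (Fin r)) : Fin (r + 1) → ℤ :=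
  Fin.cons (M - I.card) (s + 1 + (I : Set (Fin r)).indicator 1)

theorem isLowerSet_of_injective_consExchange {M : ℤ} {I : Finset (Fin r)}
    (h : Function.Injective (consExchange M (stair (M - 2)) I)) : IsLowerSet (I : Set (Fin r)) := by
  classical
  set d : Fin r → ℤ := stair (M - 2) + 1 + (I : Set (Fin r)).indicator 1
  have hinj : Function.Injective d := (Fin.cons_injective_iff.mp h).2
  have hanti : Antitone d := fun i j hij => by
    rcases hij.eq_or_lt with rfl | hlt
    · exact le_rfl
    · simp only [d, Pi.add_apply, stair, Set.indicator_apply, Pi.one_apply]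
      split_ifs <;> omega
  have := (strictAnti_iff_antitone_sub_stair (M - 1)).mp (hanti.strictAnti_of_injective hinj)
  intro j i hij hj
  by_contra hi
  have hle := this hij
  simp only [d, stair, Set.indicator_apply, Pi.add_apply, Pi.sub_apply, Pi.one_apply, hj, hi,
    if_true, if_false] at hle
  omega

theorem mem_iff_val_lt_card_of_isLowerSet {I : Finset (Fin r)} (hI : IsLowerSet (I : Set (Fin r)))
    (j : Fin r) : j ∈ I ↔ j.val < I.card := by
  refine ⟨fun hj => ?_, fun hlt => ?_⟩
  · have hsub : Finset.Iic j ⊆ I := fun i hi => hI (Finset.mem_Iic.mp hi) hj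
    simpa using Finset.card_le_card hsub
  · by_contra hj
    have hsub : I ⊆ Finset.Iio j := fun i hi =>
      Finset.mem_Iio.mpr (lt_of_not_ge fun hji => hj (hI hji hi))
    have := Finset.card_le_card hsub
    rw [Fin.card_Iio] at this
    omega

theorem card_filter_castSucc_lt (k : Fin (r + 1)) :
    Finset.card {j : Fin r | j.castSucc < k} = k := by
  simp [Fin.lt_def, Fin.card_filter_val_lt, Nat.le_of_lt_succ k.2]

theorem consExchange_filter_castSucc_lt (M : ℤ) (k : Fin (r + 1)) :
    consExchange M (stair (M - 2)) {j : Fin r | j.castSucc < k} =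
      stair M ∘ (Fin.cycleRange k).symm := by
  funext j
  refine Fin.cases ?_ (fun j => ?_) j
  · simp [consExchange, card_filter_castSucc_lt, stair, Fin.cycleRange_symm_zero]
  · rw [Function.comp_apply, Fin.cycleRange_symm_succ, Fin.succAbove]
    simp only [consExchange, Fin.cons_succ, Pi.add_apply, Pi.one_apply, stair, Set.indicator_apply,
      Finset.coe_filter, Finset.mem_univ, true_and, Set.mem_ofPred_eq]
    split_ifs
    · rw [Fin.val_castSucc]
      ring
    · rw [Fin.val_succ]
      push_cast
      ring

/-- If `I` is not an initial segment then `consExchange` has a repeated entry, and otherwise it is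
a cyclic permutation of the staircase. -/
theorem IsAlternating.sum_powerset_consExchange [IsAddTorsionFree M] {R : Type*} [Ring R]
    [Module R M] {f : (Fin (r + 1) → ℤ) → M} (hf : IsAlternating f) (c : R) (N : ℤ) :
    ∑ I : Finset (Fin r), (-c) ^ I.card • f (consExchange N (stair (N - 2)) I) =
      (∑ k ∈ Finset.range (r + 1), c ^ k) • f (stair N) := by
  rw [← Finset.powerset_univ, Finset.sum_powerset, Finset.card_univ, Fintype.card_fin,
    Finset.sum_smul, Finset.sum_range (n := r + 1), Finset.sum_range (n := r + 1)]
  refine Finset.sum_congr rfl fun k _ => ?_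
  rw [Finset.sum_eq_single (Finset.univ.filter fun j : Fin r => j.castSucc < k)]
  · rw [consExchange_filter_castSucc_lt, hf, Equiv.Perm.sign_symm, Fin.sign_cycleRange,
      card_filter_castSucc_lt, neg_pow]
    rcases Nat.even_or_odd k with hk | hk <;> simp [hk.neg_one_pow]
  · intro I hI hne
    rw [hf.eq_zero_of_not_injective, smul_zero]
    intro hinj
    refine hne (Finset.ext fun j => ?_)
    rw [mem_iff_val_lt_card_of_isLowerSet (isLowerSet_of_injective_consExchange hinj),
      (Finset.mem_powersetCard.mp hI).2]
    simp [Fin.lt_def]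
  · simp [card_filter_castSucc_lt, Finset.mem_powersetCard]

end Alternating

section GeneratingFamilies

theorem genFamF_zero (c : ℕ → Fq) : genFamF c 0 = 1 := by rw [genFamF]

theorem add_one_smul_genFamF_succ (c : ℕ → Fq) (k : ℕ) :
    ((k : Fq) + 1) • genFamF c (k + 1) =
      ∑ i ∈ Finset.range (k + 1), c (i + 1) • (X (Nat.succPNat i) * genFamF c (k - i)) := by
  rw [genFamF, smul_inv_smul₀ (Nat.cast_add_one_ne_zero k)]
  rfl

theorem genFamF_pow_mul (x : Fq) (c : ℕ → Fq) (k : ℕ) :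
    genFamF (fun n => x ^ n * c n) k = x ^ k • genFamF c k := by
  induction k using Nat.strong_induction_on with
  | _ k ih =>
    cases k with
    | zero => simp [genFamF_zero]
    | succ k =>
      refine smul_right_injective LamF (Nat.cast_add_one_ne_zero (R := Fq) k) ?_
      dsimp only
      rw [smul_comm, add_one_smul_genFamF_succ, add_one_smul_genFamF_succ, Finset.smul_sum]
      refine Finset.sum_congr rfl fun i hi => ?_
      have hik : k + 1 = (i + 1) + (k - i) := by have := Finset.mem_range.mp hi; omega
      rw [ih (k - i) (by omega), mul_smul_comm, smul_smul, smul_smul]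
      congr 1
      rw [hik, pow_add]
      ring

/-- The logarithmic derivative `∑ c (n + 1) p_{n + 1} tⁿ` of the generating series of
`genFamF c`. -/
def logDerSeries (c : ℕ → Fq) : PowerSeries LamF :=
  PowerSeries.mk fun n => c (n + 1) • X (Nat.succPNat n)

theorem mk_genFamF_eq_iff {c : ℕ → Fq} {G : PowerSeries LamF} :
    PowerSeries.mk (genFamF c) = G ↔ PowerSeries.constantCoeff G = 1 ∧
      PowerSeries.derivative LamF G = logDerSeries c * G := by
  have hcoeff : ∀ (H : PowerSeries LamF) (k : ℕ), PowerSeries.coeff k (logDerSeries c * H) =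
      ∑ i ∈ Finset.range (k + 1), c (i + 1) • (X (Nat.succPNat i) * PowerSeries.coeff (k - i) H) :=
    fun H k => by
      simp only [PowerSeries.coeff_mul, Finset.Nat.sum_antidiagonal_eq_sum_range_succ_mk,
        logDerSeries, PowerSeries.coeff_mk, smul_mul_assoc]
  have hsmul : ∀ (k : ℕ) (P : LamF), P * ((k : LamF) + 1) = ((k : Fq) + 1) • P := fun k P => by
    rw [MvPolynomial.smul_eq_C_mul, mul_comm]; simp
  refine ⟨?_, fun ⟨h0, hG⟩ => PowerSeries.ext fun k => ?_⟩
  · rintro rfl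
    refine ⟨by simp [← PowerSeries.coeff_zero_eq_constantCoeff_apply, genFamF_zero],
      PowerSeries.ext fun k => ?_⟩
    rw [PowerSeries.coeff_derivative, hsmul, hcoeff]
    simp only [PowerSeries.coeff_mk, add_one_smul_genFamF_succ]
  · rw [PowerSeries.coeff_mk]
    induction k using Nat.strong_induction_on with
    | _ k ih =>
      cases k with
      | zero => rw [genFamF_zero, PowerSeries.coeff_zero_eq_constantCoeff_apply, h0]
      | succ k =>
        refine smul_right_injective LamF (Nat.cast_add_one_ne_zero (R := Fq) k) ?_
        dsimp only
        rw [add_one_smul_genFamF_succ, ← hsmul k (PowerSeries.coeff _ G),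
          ← PowerSeries.coeff_derivative, hG, hcoeff]
        exact Finset.sum_congr rfl fun i _ => by rw [ih (k - i) (by omega)]

theorem genFamF_add (c d : ℕ → Fq) (k : ℕ) :
    genFamF (fun n => c n + d n) k =
      ∑ a ∈ Finset.range (k + 1), genFamF c a * genFamF d (k - a) := by
  obtain ⟨hc0, hc⟩ := mk_genFamF_eq_iff.mp (rfl : PowerSeries.mk (genFamF c) = _)
  obtain ⟨hd0, hd⟩ := mk_genFamF_eq_iff.mp (rfl : PowerSeries.mk (genFamF d) = _)
  have hadd : logDerSeries (fun n => c n + d n) = logDerSeries c + logDerSeries d := by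
    ext k : 1
    simp [logDerSeries, add_smul]
  have hmul : PowerSeries.mk (genFamF fun n => c n + d n) =
      PowerSeries.mk (genFamF c) * PowerSeries.mk (genFamF d) := by
    refine mk_genFamF_eq_iff.mpr ⟨by rw [map_mul, hc0, hd0, one_mul], ?_⟩
    rw [Derivation.leibniz, hc, hd, hadd, smul_eq_mul, smul_eq_mul]
    ring
  have := congrArg (PowerSeries.coeff k) hmul
  simpa only [PowerSeries.coeff_mk, PowerSeries.coeff_mul,
    Finset.Nat.sum_antidiagonal_eq_sum_range_succ_mk] using this

end GeneratingFamilies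

section DifferentialOperators

/-- The operator `i·∂/∂p_i`. -/
def dOp (i : ℕ+) : Module.End Fq LamF := ((i : ℕ) : Fq) • (pderiv i).toLinearMap

theorem dOp_apply (i : ℕ+) (P : LamF) : dOp i P = ((i : ℕ) : Fq) • pderiv i P := rfl

theorem dOp_comm (i j : ℕ+) : dOp i * dOp j = dOp j * dOp i := by
  have h : ⁅(pderiv i : Derivation Fq LamF LamF), (pderiv j : Derivation Fq LamF LamF)⁆ = 0 := by
    refine MvPolynomial.derivation_ext fun k => ?_
    rw [Derivation.commutator_apply, pderiv_X, pderiv_X]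
    simp only [Pi.single_apply]
    split_ifs <;> simp
  refine LinearMap.ext fun P => ?_
  have hP : pderiv i (pderiv j P) = pderiv j (pderiv i P) := by
    simpa [Derivation.commutator_apply, sub_eq_zero] using congrArg (· P) h
  simp only [Module.End.mul_apply, dOp_apply, map_smul]
  rw [hP, smul_comm]

instance isMulCommutative_adjoin_dOp : IsMulCommutative (Algebra.adjoin Fq (Set.range dOp)) :=
  Algebra.isMulCommutative_adjoin Fq <| by
    rintro _ ⟨i, rfl⟩ _ ⟨j, rfl⟩
    exact dOp_comm i j

open scoped IsMulCommutative in
/-- Substitution of the operators `i·∂/∂p_i` for the variables `p_i`, as an algebra homomorphism.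
It factors through the commutative algebra they generate, since `MvPolynomial.aeval` requires a
commutative target. -/
def diffOp : LamF →ₐ[Fq] Module.End Fq LamF :=
  (Algebra.adjoin Fq (Set.range dOp)).val.comp
    (aeval fun i => ⟨dOp i, Algebra.subset_adjoin ⟨i, rfl⟩⟩)

theorem diffOp_X (i : ℕ+) : diffOp (X i) = dOp i := by
  simp [diffOp]

theorem diffOp_monomial (α : ℕ+ →₀ ℕ) (a : Fq) : diffOp (monomial α a) = a • monOpF α := by
  have hmonOp : monOpF α = diffOp (monomial α 1) := by
    have hprod : monomial α (1 : Fq) =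
        ((α.support.sort (· ≤ ·)).map fun i => (X i : LamF) ^ α i).prod := by
      rw [← List.prod_toFinset _ (Finset.sort_nodup _ _), Finset.sort_toFinset, monomial_eq, C_1,
        one_mul, Finsupp.prod]
    rw [hprod, map_list_prod, List.map_map, monOpF]
    simp only [Function.comp_def, map_pow, diffOp_X, dOp]
  rw [hmonOp, ← map_smul, smul_monomial, smul_eq_mul, mul_one]

theorem DopF_eq_diffOp (f P : LamF) : DopF f P = diffOp f P := by
  conv_rhs => rw [f.as_sum]
  simp only [map_sum, diffOp_monomial, LinearMap.sum_apply, LinearMap.smul_apply, DopF]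

theorem diffOp_C (f : LamF) (a : Fq) : diffOp f (C a) = C (constantCoeff f * a) := by
  induction f using MvPolynomial.induction_on with
  | C b => rw [← algebraMap_eq, AlgHom.commutes]; simp [Module.algebraMap_end_apply, smul_eq_C_mul]
  | add f g hf hg => rw [map_add, LinearMap.add_apply, hf, hg]; simp [add_mul]
  | mul_X f i _ => rw [map_mul, diffOp_X, Module.End.mul_apply, dOp_apply]; simp

theorem dOp_mul (i : ℕ+) (P Q : LamF) : dOp i (P * Q) = dOp i P * Q + P * dOp i Q := by
  rw [dOp_apply, Derivation.leibniz, smul_eq_mul, smul_eq_mul, smul_add, dOp_apply, dOp_apply,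
    mul_smul_comm, smul_mul_assoc, mul_comm Q, add_comm]

theorem dOp_X (i n : ℕ+) : dOp i (X n) = C (if n = i then ((n : ℕ) : Fq) else 0) := by
  rw [dOp_apply, pderiv_X, Pi.single_apply]
  by_cases h : n = i <;> simp [h, smul_eq_C_mul]

theorem diffOp_mul_X (f P : LamF) (n : ℕ+) :
    diffOp f (P * X n) = diffOp f P * X n + diffOp (dOp n f) P := by
  induction f using MvPolynomial.induction_on generalizing P with
  | C b =>
    rw [← algebraMap_eq, AlgHom.commutes]
    simp [Module.algebraMap_end_apply, dOp_apply, algebraMap_eq]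
  | add f g hf hg => simp only [map_add, LinearMap.add_apply, hf, hg]; ring
  | mul_X f i hf =>
    have hsymm : dOp i (X n) = dOp n (X i) := by
      rw [dOp_X, dOp_X]
      by_cases h : i = n
      · rw [h]
      · rw [if_neg h, if_neg (Ne.symm h)]
    rw [map_mul diffOp, diffOp_X, Module.End.mul_apply, dOp_mul, map_add, hf, Module.End.mul_apply,
      dOp_mul n f, map_add, LinearMap.add_apply, map_mul diffOp, diffOp_X, Module.End.mul_apply,
      ← hsymm, dOp_X, mul_comm f, mul_comm P, ← smul_eq_C_mul, ← smul_eq_C_mul, map_smul, map_smul,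
      LinearMap.smul_apply, add_assoc]

theorem sum_smul_dOp_X_mul_genFamF (c : ℕ → Fq) (n : ℕ+) (k : ℕ) :
    ∑ i ∈ Finset.range (k + 1), c (i + 1) • (dOp n (X (Nat.succPNat i)) * genFamF c (k - i)) =
      if (n : ℕ) ≤ k + 1 then ((n : ℕ) : Fq) • c n • genFamF c (k + 1 - n) else 0 := by
  obtain ⟨m, rfl⟩ : ∃ m, n = Nat.succPNat m := ⟨n.natPred, (PNat.succPNat_natPred n).symm⟩
  have hterm : ∀ i ∈ Finset.range (k + 1),
      c (i + 1) • (dOp (Nat.succPNat m) (X (Nat.succPNat i)) * genFamF c (k - i)) =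
      if i = m then ((m + 1 : ℕ) : Fq) • c (m + 1) • genFamF c (k - m) else 0 := by
    intro i _
    simp only [dOp_X, Nat.succPNat_inj, ← smul_eq_C_mul]
    split_ifs with h
    · rw [h, smul_comm]
      rfl
    · rw [zero_smul, smul_zero]
  rw [Finset.sum_congr rfl hterm, Finset.sum_ite_eq', Nat.succPNat_coe, Nat.succ_eq_add_one]
  simp only [Finset.mem_range, Nat.lt_iff_add_one_le, Nat.add_sub_add_right]

theorem sum_smul_X_mul_ite_genFamF (c : ℕ → Fq) (n k : ℕ) (a : Fq) :
    ∑ i ∈ Finset.range (k + 1),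
        c (i + 1) • (X (Nat.succPNat i) * if n ≤ k - i then a • genFamF c (k - i - n) else 0) =
      if n ≤ k + 1 then ((k : Fq) + 1 - n) • a • genFamF c (k + 1 - n) else 0 := by
  rcases le_or_gt n k with hnk | hkn
  · obtain ⟨d, rfl⟩ := Nat.exists_eq_add_of_le hnk
    have hd : ((n + d : ℕ) : Fq) + 1 - n = d + 1 := by push_cast; ring
    rw [if_pos (by omega), hd, show n + d + 1 - n = d + 1 by omega, smul_comm,
      add_one_smul_genFamF_succ, Finset.smul_sum,
      ← Finset.sum_subset (Finset.range_subset_range.mpr (show d + 1 ≤ n + d + 1 by omega))]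
    · refine Finset.sum_congr rfl fun i hi => ?_
      have := Finset.mem_range.mp hi
      rw [if_pos (by omega), show n + d - i - n = d - i by omega, mul_smul_comm, smul_comm]
    · intro i hik hid
      rw [Finset.mem_range] at hik hid
      rw [if_neg (by omega), mul_zero, smul_zero]
  · rw [Finset.sum_eq_zero fun i _ => by rw [if_neg (by omega), mul_zero, smul_zero]]
    split_ifs with h
    · rw [show n = k + 1 by omega]
      simp
    · rfl

theorem dOp_genFamF (c : ℕ → Fq) (n : ℕ+) (j : ℕ) :
    dOp n (genFamF c j) = if (n : ℕ) ≤ j then c n • genFamF c (j - n) else 0 := by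
  induction j using Nat.strong_induction_on with
  | _ j ih =>
    cases j with
    | zero => simp [genFamF_zero, dOp_apply]
    | succ k =>
      have hX := sum_smul_dOp_X_mul_genFamF c n k
      have hg : ∑ i ∈ Finset.range (k + 1),
          c (i + 1) • (X (Nat.succPNat i) * dOp n (genFamF c (k - i))) =
          if (n : ℕ) ≤ k + 1 then ((k : Fq) + 1 - (n : ℕ)) • c n • genFamF c (k + 1 - n)
          else 0 := by
        rw [← sum_smul_X_mul_ite_genFamF]
        exact Finset.sum_congr rfl fun i _ => by rw [ih (k - i) (by omega)]
      refine smul_right_injective LamF (Nat.cast_add_one_ne_zero (R := Fq) k) ?_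
      dsimp only
      rw [← map_smul, add_one_smul_genFamF_succ, map_sum]
      simp only [map_smul, dOp_mul, smul_add, Finset.sum_add_distrib, hX, hg]
      split_ifs
      · rw [← add_smul, add_sub_cancel]
      · rw [add_zero, smul_zero]

theorem constantCoeff_genFamF (c : ℕ → Fq) (k : ℕ) :
    constantCoeff (genFamF c k) = if k = 0 then 1 else 0 := by
  cases k with
  | zero => simp [genFamF_zero]
  | succ k =>
    have h := congrArg constantCoeff (add_one_smul_genFamF_succ c k)
    simpa [smul_eq_C_mul, Nat.cast_add_one_ne_zero] using h

/-- The translation `p_n ↦ p_n + c_n tⁿ`, i.e. the operator `exp (∑ c_n tⁿ ∂/∂p_n)`. -/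
def shiftHom (c : ℕ → Fq) : LamF →ₐ[Fq] Polynomial LamF :=
  aeval fun n : ℕ+ => Polynomial.C (X n) + Polynomial.C (C (c n)) * Polynomial.X ^ (n : ℕ)

theorem shiftHom_X (c : ℕ → Fq) (n : ℕ+) :
    shiftHom c (X n) = Polynomial.C (X n) + Polynomial.C (C (c n)) * Polynomial.X ^ (n : ℕ) :=
  aeval_X _ _

/-- Taylor's formula. -/
theorem DopF_genFamF (c : ℕ → Fq) (j : ℕ) (P : LamF) :
    DopF (genFamF c j) P = (shiftHom c P).coeff j := by
  rw [DopF_eq_diffOp]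
  induction P using MvPolynomial.induction_on generalizing j with
  | C a =>
    rw [diffOp_C, constantCoeff_genFamF, ← algebraMap_eq, AlgHom.commutes,
      Polynomial.algebraMap_apply, Polynomial.coeff_C]
    split_ifs <;> simp
  | add P Q hP hQ => rw [map_add, map_add, Polynomial.coeff_add, hP, hQ]
  | mul_X P n hP =>
    have hdOp : diffOp (dOp n (genFamF c j)) P =
        if (n : ℕ) ≤ j then C (c n) * (shiftHom c P).coeff (j - n) else 0 := by
      rw [dOp_genFamF]
      split_ifs
      · rw [map_smul, LinearMap.smul_apply, hP, smul_eq_C_mul]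
      · simp
    rw [diffOp_mul_X, hP, hdOp, map_mul, shiftHom_X, mul_add, Polynomial.coeff_add,
      Polynomial.coeff_mul_C, ← mul_assoc, Polynomial.coeff_mul_X_pow', Polynomial.coeff_mul_C,
      mul_comm (C (c n))]

end DifferentialOperators

section CompleteHomogeneous

theorem qq_ne_zero : qq ≠ 0 := RatFunc.X_ne_zero

theorem hZF_of_neg {n : ℤ} (h : n < 0) : hZF n = 0 := if_neg (not_le.mpr h)

theorem hZF_natCast (n : ℕ) : hZF (n : ℤ) = hhF n := by simp [hZF]

theorem hZF_zero : hZF 0 = 1 := (hZF_natCast 0).trans (genFamF_zero _)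

theorem intCast_smul_hZF {n : ℤ} {k : ℕ} (h : n ≤ k) :
    (n : Fq) • hZF n = ∑ i ∈ Finset.range k, X (Nat.succPNat i) * hZF (n - 1 - i) := by
  rcases le_or_gt n 0 with hn | hn
  · rw [Finset.sum_eq_zero fun i _ => by rw [hZF_of_neg (by omega), mul_zero]]
    rcases hn.eq_or_lt with rfl | hn
    · simp
    · rw [hZF_of_neg hn, smul_zero]
  · obtain ⟨m, rfl⟩ : ∃ m : ℕ, n = (m + 1 : ℕ) := ⟨n.toNat - 1, by omega⟩
    rw [hZF_natCast, Int.cast_natCast, Nat.cast_add_one, hhF, add_one_smul_genFamF_succ,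
      ← Finset.sum_subset (Finset.range_subset_range.mpr (Nat.cast_le.mp h))]
    · refine Finset.sum_congr rfl fun i hi => ?_
      rw [Finset.mem_range] at hi
      rw [one_smul, show ((m + 1 : ℕ) : ℤ) - 1 - i = (m - i : ℕ) by omega, hZF_natCast, hhF]
    · intro i _ hi
      rw [Finset.mem_range] at hi
      rw [hZF_of_neg (by omega), mul_zero]

theorem hasFiniteSupport_smul_hZF_mul_hZF (w : ℤ → Fq) (n : ℤ) :
    (fun a => w a • (hZF a * hZF (n - a))).HasFiniteSupport := by
  refine (Set.finite_Icc 0 n).subset fun a ha => ?_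
  by_contra h
  rcases not_and_or.mp h with h | h
  · exact ha (by simp [hZF_of_neg (not_le.mp h)])
  · exact ha (by simp [hZF_of_neg (show n - a < 0 by omega)])

theorem HpF_eq_sum (k : ℕ) : HpF k =
    ∑ a ∈ Finset.range (k + 1), qq ^ ((k : ℤ) - 2 * a) • (hhF a * hhF (k - a)) := by
  have hsplit : (fun n => (1 + qq ^ (2 * n)) * qq⁻¹ ^ n) =
      fun n => qq⁻¹ ^ n * 1 + qq ^ n * 1 := by
    funext n
    have hinv : qq ^ n * qq⁻¹ ^ n = 1 := by rw [← mul_pow, mul_inv_cancel₀ qq_ne_zero, one_pow]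
    linear_combination qq ^ n * hinv
  rw [HpF, hsplit, genFamF_add]
  refine Finset.sum_congr rfl fun a ha => ?_
  rw [genFamF_pow_mul, genFamF_pow_mul, smul_mul_smul_comm, hhF, inv_pow, ← zpow_natCast,
    ← zpow_natCast, ← zpow_neg, ← zpow_add₀ qq_ne_zero,
    Nat.cast_sub (Nat.le_of_lt_succ (Finset.mem_range.mp ha))]
  ring_nf

theorem HZp_eq_finsum (n : ℤ) :
    HZp n = ∑ᶠ a : ℤ, qq ^ (n - 2 * a) • (hZF a * hZF (n - a)) := by
  rcases lt_or_ge n 0 with hn | hn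
  · rw [HZp, if_neg hn.not_ge, finsum_eq_zero_of_forall_eq_zero]
    intro a
    rcases lt_or_ge a 0 with ha | ha
    · simp [hZF_of_neg ha]
    · simp [hZF_of_neg (show n - a < 0 by omega)]
  · lift n to ℕ using hn
    rw [HZp, if_pos n.cast_nonneg, Int.toNat_natCast, HpF_eq_sum,
      finsum_eq_finsetSum_of_support_subset (s := (Finset.range (n + 1)).map Nat.castEmbedding)]
    · rw [Finset.sum_map]
      refine Finset.sum_congr rfl fun a ha => ?_
      rw [Finset.mem_range] at ha
      rw [Nat.castEmbedding_apply, hZF_natCast, show (n : ℤ) - a = (n - a : ℕ) by omega,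
        hZF_natCast]
    · intro a ha
      have h₁ : 0 ≤ a := by by_contra h; exact ha (by simp [hZF_of_neg (not_le.mp h)])
      have h₂ : 0 ≤ (n : ℤ) - a := by by_contra h; exact ha (by simp [hZF_of_neg (not_le.mp h)])
      lift a to ℕ using h₁
      simp only [Finset.coe_map, Set.mem_image, Finset.coe_range, Set.mem_Iio]
      exact ⟨a, by omega, rfl⟩

/-- The generating series `∑ (-t)^j e_j^⊥` of the operators adjoint to multiplication by the
elementary symmetric functions: it is the translation `p_n ↦ p_n - tⁿ`. -/
def ePerp : LamF →ₐ[Fq] Polynomial LamF := shiftHom fun _ => -1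

theorem ePerp_X (n : ℕ+) : ePerp (X n) = Polynomial.C (X n) - Polynomial.X ^ (n : ℕ) := by
  rw [ePerp, shiftHom_X, C_neg, C_1, Polynomial.C_neg, Polynomial.C_1]
  ring

theorem sum_X_pow_mul_C_hZF_sub (n : ℕ) :
    ∑ i ∈ Finset.range n, Polynomial.X ^ i * (Polynomial.C (hZF (n - 1 - i)) -
        Polynomial.X * Polynomial.C (hZF (n - 1 - i - 1))) = Polynomial.C (hZF (n - 1)) := by
  have hsub (i : ℕ) : Polynomial.X ^ i * (Polynomial.C (hZF (n - 1 - i)) -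
      Polynomial.X * Polynomial.C (hZF (n - 1 - i - 1))) =
      Polynomial.X ^ i * Polynomial.C (hZF (n - 1 - i)) -
        Polynomial.X ^ (i + 1) * Polynomial.C (hZF (n - 1 - (i + 1 : ℕ))) := by
    rw [Nat.cast_add_one, ← sub_sub]
    ring
  simp only [hsub]
  rw [Finset.sum_range_sub' fun i : ℕ => Polynomial.X ^ i * Polynomial.C (hZF (n - 1 - i)),
    hZF_of_neg (n := (n : ℤ) - 1 - n) (by omega)]
  simp

theorem natCast_smul_ePerp_hZF {n : ℕ}
    (h : ∀ k < n, ePerp (hZF k) =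
      Polynomial.C (hZF k) - Polynomial.X * Polynomial.C (hZF (k - 1))) :
    (n : Fq) • ePerp (hZF n) =
      (n : Fq) • (Polynomial.C (hZF n) - Polynomial.X * Polynomial.C (hZF (n - 1))) := by
  have hC (m : ℤ) (hm : m ≤ n) : ∑ i ∈ Finset.range n,
      Polynomial.C (X (Nat.succPNat i)) * Polynomial.C (hZF (m - 1 - i)) =
        (m : Fq) • Polynomial.C (hZF m) := by
    rw [Polynomial.smul_C, intCast_smul_hZF hm, map_sum]
    simp only [Polynomial.C_mul]
  have hstep : ∀ i ∈ Finset.range n, ePerp (X (Nat.succPNat i) * hZF (n - 1 - i)) =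
      Polynomial.C (X (Nat.succPNat i)) * Polynomial.C (hZF (n - 1 - i)) -
      Polynomial.X * (Polynomial.C (X (Nat.succPNat i)) * Polynomial.C (hZF (n - 1 - 1 - i))) -
      Polynomial.X * (Polynomial.X ^ i * (Polynomial.C (hZF (n - 1 - i)) -
        Polynomial.X * Polynomial.C (hZF (n - 1 - i - 1)))) := by
    intro i hi
    have hk : (n : ℤ) - 1 - i = (n - 1 - i : ℕ) := by
      have := Finset.mem_range.mp hi
      omega
    rw [sub_right_comm (_ - 1) 1, map_mul, ePerp_X, hk, h (n - 1 - i) (by omega),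
      Nat.succPNat_coe, Nat.succ_eq_add_one]
    ring
  calc (n : Fq) • ePerp (hZF n)
      = ∑ i ∈ Finset.range n, ePerp (X (Nat.succPNat i) * hZF (n - 1 - i)) := by
        rw [← map_smul, ← Int.cast_natCast, intCast_smul_hZF le_rfl, map_sum]
    _ = (n : Fq) • Polynomial.C (hZF n) - Polynomial.X * ((n : Fq) - 1) • Polynomial.C (hZF (n - 1))
          - Polynomial.X * Polynomial.C (hZF (n - 1)) := by
        rw [Finset.sum_congr rfl hstep, Finset.sum_sub_distrib, Finset.sum_sub_distrib,
          ← Finset.mul_sum, ← Finset.mul_sum, sum_X_pow_mul_C_hZF_sub, hC n le_rfl,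
          hC (n - 1) (by omega)]
        push_cast
        rfl
    _ = _ := by
        rw [smul_sub, sub_smul, one_smul, mul_sub, mul_smul_comm]
        abel

theorem ePerp_hZF (n : ℤ) :
    ePerp (hZF n) = Polynomial.C (hZF n) - Polynomial.X * Polynomial.C (hZF (n - 1)) := by
  rcases lt_or_ge n 0 with hn | hn
  · rw [hZF_of_neg hn, hZF_of_neg (by omega)]
    simp
  lift n to ℕ using hn
  induction n using Nat.strong_induction_on with
  | _ n ih =>
    rcases n.eq_zero_or_pos with rfl | hn
    · rw [Nat.cast_zero, hZF_zero, hZF_of_neg (by omega)]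
      simp
    · exact smul_right_injective _ ((Nat.cast_ne_zero (R := Fq)).mpr hn.ne')
        (natCast_smul_ePerp_hZF ih)

theorem natDegree_ePerp_le (P : LamF) : (ePerp P).natDegree ≤ wboundF P := by
  rw [ePerp, shiftHom, aeval_def, eval₂_eq]
  refine Polynomial.natDegree_sum_le_of_forall_le _ _ fun α hα => ?_
  have h : (α.sum fun i k => (i : ℕ) * k) ≤ wboundF P :=
    Finset.le_sup (f := fun α : ℕ+ →₀ ℕ => α.sum fun i k => (i : ℕ) * k) hα
  refine (Polynomial.natDegree_C_mul_le (C (P.coeff α)) _).trans (le_trans ?_ h)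
  refine (Polynomial.natDegree_prod_le _ _).trans (Finset.sum_le_sum fun i _ => ?_)
  refine (Polynomial.natDegree_pow_le_of_le (α i) ?_).trans (mul_comm (α i) _).le
  exact Polynomial.natDegree_add_le_of_degree_le (by simp)
    (Polynomial.natDegree_C_mul_X_pow_le _ _)

theorem DopF_ApF (j : ℕ) (P : LamF) : DopF (ApF j) P = qq⁻¹ ^ j • (ePerp P).coeff j := by
  have h : ApF j = qq⁻¹ ^ j • genFamF (fun _ => -1) j := by
    rw [← genFamF_pow_mul, ApF]
    simp only [mul_neg_one]
  rw [h, DopF_eq_diffOp, map_smul, LinearMap.smul_apply, ← DopF_eq_diffOp, DopF_genFamF, ePerp]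

end CompleteHomogeneous

section Bernstein

/-- The `Λ_F`-linear functional on `Λ_F[t]` sending `t^j` to `w j`. -/
def umbral (w : ℕ → LamF) : Polynomial LamF →ₗ[LamF] LamF :=
  Polynomial.lsum fun j => LinearMap.toSpanSingleton LamF LamF (w j)

theorem umbral_apply (w : ℕ → LamF) (f : Polynomial LamF) :
    umbral w f = f.sum fun j a => a * w j := by
  simp [umbral, Polynomial.lsum_apply]

theorem umbral_C_mul (w : ℕ → LamF) (c : LamF) (f : Polynomial LamF) :
    umbral w (Polynomial.C c * f) = c * umbral w f := by
  rw [← Polynomial.smul_eq_C_mul, map_smul, smul_eq_mul]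

theorem umbral_monomial (w : ℕ → LamF) (j : ℕ) (c : LamF) :
    umbral w (Polynomial.monomial j c) = c * w j := by
  rw [umbral_apply, Polynomial.sum_monomial_index c (fun j a => a * w j) (zero_mul _)]

theorem umbral_X_mul (w : ℕ → LamF) (f : Polynomial LamF) :
    umbral w (Polynomial.X * f) = umbral (fun j => w (j + 1)) f := by
  induction f using Polynomial.induction_on' with
  | add f g hf hg => rw [mul_add, map_add, map_add, hf, hg]
  | monomial n a => rw [Polynomial.X_mul_monomial, umbral_monomial, umbral_monomial]

/-- The matrix `M` with the row `v` added on top. -/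
def consRow {R : Type*} {l n : ℕ} (v : Fin n → R) (M : Matrix (Fin l) (Fin n) R) :
    Matrix (Fin (l + 1)) (Fin n) R :=
  Matrix.of (Fin.cons v M)

@[simp] theorem consRow_zero {R : Type*} {l n : ℕ} (v : Fin n → R) (M : Matrix (Fin l) (Fin n) R)
    (j : Fin n) : consRow v M 0 j = v j := rfl

@[simp] theorem consRow_succ {R : Type*} {l n : ℕ} (v : Fin n → R) (M : Matrix (Fin l) (Fin n) R)
    (i : Fin l) (j : Fin n) : consRow v M i.succ j = M i j := rfl

theorem umbral_det_consRow_X_pow {l : ℕ} (w : ℕ → LamF) (M : Matrix (Fin l) (Fin (l + 1)) LamF) :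
    umbral w (consRow (fun j => Polynomial.X ^ (j : ℕ)) (M.map Polynomial.C)).det =
      (consRow (fun j => w j) M).det := by
  rw [Matrix.det_succ_row_zero, Matrix.det_succ_row_zero, map_sum]
  refine Finset.sum_congr rfl fun k _ => ?_
  have hminor : ((consRow (fun j : Fin (l + 1) => Polynomial.X ^ (j : ℕ))
      (M.map Polynomial.C)).submatrix Fin.succ k.succAbove).det =
      Polynomial.C ((consRow (fun j => w j) M).submatrix Fin.succ k.succAbove).det := by
    rw [RingHom.map_det]
    rfl
  have hsign : (-1 : Polynomial LamF) ^ (k : ℕ) = Polynomial.C ((-1) ^ (k : ℕ)) := by simp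
  rw [hminor, hsign, consRow_zero, mul_right_comm, ← map_mul, umbral_C_mul,
    ← Polynomial.monomial_one_right_eq_X_pow, umbral_monomial, one_mul, mul_right_comm,
    consRow_zero]

/-- The Bernstein operator `B_b = ∑_j (-1)^j h_{b+j} e_j^⊥`. -/
def bernsteinOp (b : ℤ) : LamF →ₗ[Fq] LamF :=
  (umbral fun j => hZF (b + j)).restrictScalars Fq ∘ₗ ePerp.toLinearMap

theorem bernsteinOp_apply (b : ℤ) (P : LamF) :
    bernsteinOp b P = umbral (fun j => hZF (b + j)) (ePerp P) := rfl

theorem bernsteinOp_hZF_mul (b a : ℤ) (P : LamF) :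
    bernsteinOp b (hZF a * P) = hZF a * bernsteinOp b P - hZF (a - 1) * bernsteinOp (b + 1) P := by
  simp only [bernsteinOp_apply, map_mul, ePerp_hZF, sub_mul, map_sub, mul_assoc, umbral_X_mul,
    umbral_C_mul, Nat.cast_add_one, add_right_comm b, add_assoc b]

theorem bernsteinOp_prod_hZF_mul {ι : Type*} (s : Finset ι) (a : ι → ℤ) (b : ℤ)
    (P : LamF) :
    bernsteinOp b ((∏ k ∈ s, hZF (a k)) * P) = ∑ I ∈ s.powerset, (-1 : Fq) ^ I.card •
      ((∏ k ∈ s, hZF (a k - (I : Set ι).indicator 1 k)) * bernsteinOp (b + I.card) P) := by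
  classical
  induction s using Finset.induction_on generalizing b with
  | empty => simp
  | insert x s hx ih =>
    have hnot {I : Finset ι} (hI : I ∈ s.powerset) : x ∉ I := fun h =>
      hx (Finset.mem_powerset.mp hI h)
    rw [Finset.prod_insert hx, mul_assoc, bernsteinOp_hZF_mul, ih, ih,
      Finset.sum_powerset_insert hx, sub_eq_add_neg, Finset.mul_sum, Finset.mul_sum,
      ← Finset.sum_neg_distrib]
    congr 1
    · refine Finset.sum_congr rfl fun I hI => ?_
      rw [Finset.prod_insert hx, Set.indicator_of_notMem (by simpa using hnot hI), sub_zero,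
        mul_smul_comm, mul_assoc]
    · refine Finset.sum_congr rfl fun I hI => ?_
      have hprod : ∏ k ∈ s, hZF (a k - ((insert x I : Finset ι) : Set ι).indicator 1 k) =
          ∏ k ∈ s, hZF (a k - (I : Set ι).indicator 1 k) := by
        refine Finset.prod_congr rfl fun k hk => ?_
        have hkx : k ≠ x := fun h => hx (h ▸ hk)
        simp [Set.indicator_apply, hkx]
      rw [Finset.prod_insert hx, hprod, Set.indicator_of_mem (by simp), Pi.one_apply,
        Finset.card_insert_of_notMem (hnot hI), mul_smul_comm, pow_succ, mul_neg_one, neg_smul,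
        mul_assoc, Nat.cast_add_one, add_right_comm b, add_assoc b]

/-- The determinant `det (h_{j - y_i})`, the Schur function of the tuple `(i - y_i)_i`. -/
def detH {l : ℕ} (y : Fin l → ℤ) : LamF := (Matrix.of fun i j : Fin l => hZF (j - y i)).det

theorem detH_sub {l : ℕ} (ρ : Fin l → ℤ) : detH (fun k => k - ρ k) = schurF ρ := by
  rw [detH, schurF]
  congr 2
  funext i j
  congr 1
  ring

theorem isAlternating_detH {l : ℕ} : IsAlternating (detH (l := l)) := by
  intro σ y
  rw [detH, Units.smul_def, zsmul_eq_mul]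
  exact Matrix.det_permute σ (Matrix.of fun i j : Fin l => hZF (j - y i))

/-- Subtracting `t` times the previous column from every column clears the first row
`1, t, t², …`, and turns the entries `h_n` of the other rows into `ePerp h_n`. -/
theorem ePerp_detH {l : ℕ} (y : Fin l → ℤ) :
    ePerp (detH y) = (consRow (fun j => Polynomial.X ^ (j : ℕ))
      ((Matrix.of fun i (j : Fin (l + 1)) => hZF (j - (y i + 1))).map Polynomial.C)).det := by
  let B : Matrix (Fin (l + 1)) (Fin (l + 1)) (Polynomial LamF) :=
    consRow (Fin.cons 1 0) (Matrix.of fun i =>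
      Fin.cons (Polynomial.C (hZF (0 - (y i + 1)))) fun j : Fin l => ePerp (hZF (j - y i)))
  have hB : B.det = ePerp (detH y) := by
    rw [Matrix.det_succ_row_zero, Finset.sum_eq_single 0]
    · rw [detH, AlgHom.map_det]
      simp only [B, consRow_zero, Fin.cons_zero, Fin.val_zero, pow_zero, one_mul]
      rfl
    · intro j _ hj
      obtain ⟨j, rfl⟩ := Fin.exists_succ_eq_of_ne_zero hj
      simp [B]
    · simp
  rw [← hB]
  refine (Matrix.det_eq_of_forall_col_eq_smul_add_pred (fun _ => Polynomial.X) ?_ ?_).symm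
  · intro i
    refine Fin.cases ?_ (fun i => ?_) i <;> simp [B]
  · intro i j
    refine Fin.cases ?_ (fun i => ?_) i
    · simp [B, pow_succ']
    · have h₁ : ((j : ℕ) + 1 : ℤ) - (y i + 1) = j - y i := by ring
      have h₂ : (j : ℤ) - (y i + 1) = j - y i - 1 := by ring
      simp [B, ePerp_hZF, h₁, h₂]

theorem bernsteinOp_detH {l : ℕ} (b : ℤ) (y : Fin l → ℤ) :
    bernsteinOp b (detH y) = detH (Fin.cons (-b) (y + 1) : Fin (l + 1) → ℤ) := by
  rw [bernsteinOp_apply, ePerp_detH, umbral_det_consRow_X_pow, detH]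
  congr 1
  funext i j
  refine Fin.cases ?_ (fun i => ?_) i
  · simp [add_comm b]
  · simp

end Bernstein

section Current

/-- The component of `X_n^+` on `e^{mα}e^{iα/2}`, which depends only on `N = n + 1 + 2m + i`. -/
def current (N : ℤ) : LamF →ₗ[Fq] LamF :=
  (umbral fun j => qq⁻¹ ^ j • HZp (j - N)).restrictScalars Fq ∘ₗ ePerp.toLinearMap

theorem current_apply (N : ℤ) (P : LamF) :
    current N P = umbral (fun j => qq⁻¹ ^ j • HZp (j - N)) (ePerp P) := rfl

theorem Xp_single (i n m : ℤ) (P : LamF) :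
    Xp i n (Finsupp.single m P) = Finsupp.single (m + 1) (current (n + 1 + 2 * m + i) P) := by
  rw [Xp, Finsupp.sum_single_index]
  · rw [current_apply, umbral_apply, Polynomial.sum_over_range' _ _ (wboundF P + 1)
      (Nat.lt_succ_of_le (natDegree_ePerp_le P))]
    · congr 1
      refine Finset.sum_congr rfl fun j _ => ?_
      rw [DopF_ApF, mul_smul_comm, mul_smul_comm, mul_comm (HZp _)]
      congr 3
      ring
    · simp
  · simp [DopF_ApF]

/-- The coefficientwise form of `X⁺(z) = H(q⁻¹z) B(qz)`, where `H(z) = ∑ h_a z^a` and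
`B(z) = ∑ B_b z^b`. -/
theorem current_eq_finsum (N : ℤ) (P : LamF) :
    current N P = ∑ᶠ a : ℤ, qq ^ (-N - 2 * a) • (hZF a * bernsteinOp (-N - a) P) := by
  have hexp (a : ℤ) (j : ℕ) : qq ^ (-N - 2 * a) = qq⁻¹ ^ j * qq ^ ((j : ℤ) - N - 2 * a) := by
    rw [inv_pow, ← zpow_natCast, ← zpow_neg, ← zpow_add₀ qq_ne_zero]
    ring_nf
  have hterm (a : ℤ) : qq ^ (-N - 2 * a) • (hZF a * bernsteinOp (-N - a) P) =
      ∑ j ∈ (ePerp P).support, ((ePerp P).coeff j * C (qq⁻¹ ^ j)) *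
        (qq ^ ((j : ℤ) - N - 2 * a) • (hZF a * hZF (j - N - a))) := by
    rw [bernsteinOp_apply, umbral_apply, Polynomial.sum_def, Finset.mul_sum, Finset.smul_sum]
    refine Finset.sum_congr rfl fun j _ => ?_
    rw [hexp a j, show -N - a + j = (j : ℤ) - N - a by ring, mul_smul, smul_eq_C_mul]
    simp only [smul_eq_C_mul]
    ring
  have hsupp (j : ℕ) := hasFiniteSupport_smul_hZF_mul_hZF
    (fun a => qq ^ ((j : ℤ) - N - 2 * a)) (j - N)
  rw [finsum_congr hterm, finsum_sum_comm _ _ fun j _ =>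
    (hsupp j).subset fun a ha => right_ne_zero_of_mul ha, current_apply, umbral_apply,
    Polynomial.sum_def]
  refine Finset.sum_congr rfl fun j _ => ?_
  rw [← mul_finsum' _ _ (hsupp j), ← HZp_eq_finsum, smul_eq_C_mul, mul_assoc]

end Current

section AlternatingSum

variable {r l : ℕ}

theorem detH_comp_cast {l l' : ℕ} (h : l = l') (y : Fin l' → ℤ) :
    detH (y ∘ Fin.cast h) = detH y := by
  subst h
  rfl

theorem detH_eq_zero {y : Fin l → ℤ} (h : ∑ k : Fin l, (k : ℤ) < ∑ k, y k) : detH y = 0 := by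
  rw [detH, Matrix.det_apply]
  refine Finset.sum_eq_zero fun σ _ => ?_
  obtain ⟨j, -, hj⟩ : ∃ j : Fin l, j ∈ Finset.univ ∧ (j : ℤ) < y (σ j) :=
    Finset.exists_lt_of_sum_lt (by rwa [Equiv.sum_comp σ y])
  rw [Finset.prod_eq_zero (Finset.mem_univ j), smul_zero]
  exact hZF_of_neg (sub_neg.mpr hj)

theorem bernsteinOp_detH_append (b : ℤ) (x : Fin r → ℤ) (y : Fin l → ℤ) :
    bernsteinOp b (detH (Fin.append x y)) =
      detH (Fin.append (Fin.cons (-b) (x + 1) : Fin (r + 1) → ℤ) (y + 1)) := by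
  have happend : Fin.append x y + 1 = Fin.append (x + 1) (y + 1) := by
    funext k
    refine Fin.addCases (fun k => ?_) (fun k => ?_) k <;> simp
  rw [bernsteinOp_detH, happend, Fin.append_cons, detH_comp_cast]

/-- The coefficient `q^{-2|a|} h_{a_1} ⋯ h_{a_r}`. -/
def scaledH (a : Fin r → ℤ) : LamF := qq ^ (-2 * ∑ k, a k) • ∏ k, hZF (a k)

theorem scaledH_comp_perm (a : Fin r → ℤ) (σ : Equiv.Perm (Fin r)) :
    scaledH (a ∘ σ) = scaledH a := by
  simp only [scaledH, Function.comp_apply, Equiv.sum_comp σ a, Equiv.prod_comp σ (hZF <| a ·)]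

theorem nonneg_of_scaledH_ne_zero {a : Fin r → ℤ} (h : scaledH a ≠ 0) : 0 ≤ a := by
  intro k
  by_contra hk
  refine h ?_
  rw [scaledH, Finset.prod_eq_zero (Finset.mem_univ k) (hZF_of_neg (not_le.mp hk)), smul_zero]

/-- The summand `q^{-2|a|} h_a · det(h_{j - x_i})`, where `x = (a + s, y)`, of `altSum y s`. -/
def altTerm (y : Fin l → ℤ) (s a : Fin r → ℤ) : LamF :=
  scaledH a * detH (Fin.append (a + s) y)

/-- The alternating sum `∑_{a ∈ ℤ^r} q^{-2|a|} h_a · det(h_{j - x_i})`, where `x = (a + s, y)`, in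
terms of which the powers of `X_n^+` are computed. -/
def altSum (y : Fin l → ℤ) (s : Fin r → ℤ) : LamF := ∑ᶠ a, altTerm y s a

theorem hasFiniteSupport_altTerm (y : Fin l → ℤ) (s : Fin r → ℤ) :
    (altTerm y s).HasFiniteSupport := by
  refine (Set.finite_Icc (0 : Fin r → ℤ) fun _ =>
    ∑ k : Fin (r + l), (k : ℤ) - ∑ k, s k - ∑ k, y k).subset fun a ha => ?_
  have hnonneg := nonneg_of_scaledH_ne_zero (left_ne_zero_of_mul ha)
  refine ⟨hnonneg, fun k =>
    (Finset.single_le_sum (fun i _ => hnonneg i) (Finset.mem_univ k)).trans ?_⟩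
  by_contra hlt
  refine ha ?_
  rw [altTerm, detH_eq_zero, mul_zero]
  simp only [Fin.sum_univ_add (fun k => Fin.append (a + s) y k), Fin.append_left,
    Fin.append_right, Pi.add_apply, Finset.sum_add_distrib]
  linarith

theorem isAlternating_altSum (y : Fin l → ℤ) : IsAlternating (altSum (r := r) y) := by
  intro σ s
  have hterm (a : Fin r → ℤ) :
      altTerm y (s ∘ σ) (a ∘ σ) = Equiv.Perm.sign σ • altTerm y s a := by
    have hdet : detH (Fin.append ((a + s) ∘ σ) y) = _ :=
      isAlternating_detH.append_right y σ (a + s)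
    rw [altTerm, altTerm, scaledH_comp_perm, show a ∘ σ + s ∘ σ = (a + s) ∘ σ from rfl, hdet,
      mul_smul_comm]
  rw [altSum, altSum, Units.smul_def, smul_finsum,
    ← finsum_comp_equiv (Equiv.arrowCongr σ.symm (Equiv.refl ℤ))]
  exact finsum_congr hterm

theorem altSum_zero (y : Fin l → ℤ) (s : Fin 0 → ℤ) :
    altSum y s = detH y := by
  rw [altSum, finsum_unique, altTerm, Fin.append_left_nil _ _ rfl, detH_comp_cast]
  simp [scaledH]

/-- The substitution `(a₀, a) ↦ (a₀, a - 1_I)`. -/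
def consShift (I : Finset (Fin r)) : ℤ × (Fin r → ℤ) ≃ (Fin (r + 1) → ℤ) :=
  ((Equiv.refl ℤ).prodCongr (Equiv.subRight ((I : Set (Fin r)).indicator 1))).trans
    (Fin.consEquiv fun _ => ℤ)

theorem consShift_apply (I : Finset (Fin r)) (p : ℤ × (Fin r → ℤ)) :
    consShift I p = Fin.cons p.1 (p.2 - (I : Set (Fin r)).indicator 1) := rfl

theorem sum_consShift (I : Finset (Fin r)) (p : ℤ × (Fin r → ℤ)) :
    ∑ k, consShift I p k = p.1 + ∑ k, p.2 k - I.card := by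
  classical
  simp only [consShift_apply, Fin.sum_cons, Pi.sub_apply, Finset.sum_sub_distrib,
    Set.indicator_apply, Finset.mem_coe, Pi.one_apply, Finset.sum_boole, Finset.filter_univ_mem]
  ring

theorem consShift_add_consExchange (M : ℤ) (s : Fin r → ℤ) (I : Finset (Fin r))
    (p : ℤ × (Fin r → ℤ)) :
    consShift I p + consExchange M s I = Fin.cons (p.1 + (M - I.card)) (p.2 + s + 1) := by
  funext k
  refine Fin.cases ?_ (fun k => ?_) k
  · simp [consShift_apply, consExchange]
  · simp only [consShift_apply, consExchange, Pi.add_apply, Fin.cons_succ, Pi.sub_apply]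
    ring

theorem smul_hZF_mul_bernsteinOp_altTerm (M : ℤ) (y : Fin l → ℤ) (s : Fin r → ℤ)
    (p : ℤ × (Fin r → ℤ)) :
    qq ^ (-M - 2 * p.1) • (hZF p.1 * bernsteinOp (-M - p.1) (altTerm y s p.2)) =
      qq ^ (-M) • ∑ I : Finset (Fin r), (-qq ^ (-2 : ℤ)) ^ I.card •
        altTerm (y + 1) (consExchange M s I) (consShift I p) := by
  rw [altTerm, scaledH, smul_mul_assoc, map_smul, bernsteinOp_prod_hZF_mul,
    Finset.powerset_univ, Finset.smul_sum, Finset.mul_sum, Finset.smul_sum, Finset.smul_sum]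
  refine Finset.sum_congr rfl fun I _ => ?_
  have hexp : qq ^ (-M - 2 * p.1) * qq ^ (-2 * ∑ k, p.2 k) * (-1) ^ I.card =
      qq ^ (-M) * (-qq ^ (-2 : ℤ)) ^ I.card * qq ^ (-2 * (p.1 + ∑ k, p.2 k - I.card)) := by
    rw [neg_pow (qq ^ _), ← zpow_natCast (qq ^ _), ← zpow_mul, mul_left_comm (qq ^ _), mul_assoc _ _
      (qq ^ _), mul_comm _ ((-1) ^ _), ← zpow_add₀ qq_ne_zero, ← zpow_add₀ qq_ne_zero,
      ← zpow_add₀ qq_ne_zero]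
    ring_nf
  rw [altTerm, scaledH, smul_mul_assoc, sum_consShift, consShift_add_consExchange,
    bernsteinOp_detH_append, Fin.prod_univ_succ, consShift_apply, smul_smul, smul_smul, smul_smul,
    ← hexp]
  simp only [mul_smul_comm, smul_smul, mul_assoc, Fin.cons_zero, Fin.cons_succ, Pi.sub_apply]
  rw [show -(-M - p.1 + (I.card : ℤ)) = p.1 + (M - I.card) by ring]

theorem hasFiniteSupport_altTerm_consShift (c : Fq) (y : Fin l → ℤ) (s : Fin (r + 1) → ℤ)
    (I : Finset (Fin r)) : (fun p => c • altTerm y s (consShift I p)).HasFiniteSupport :=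
  ((hasFiniteSupport_altTerm y s).preimage (consShift I).injective.injOn).subset
    fun _ hp => right_ne_zero_of_smul hp

theorem current_altSum (M : ℤ) (y : Fin l → ℤ) (s : Fin r → ℤ) :
    current M (altSum y s) = qq ^ (-M) • ∑ I : Finset (Fin r),
      (-qq ^ (-2 : ℤ)) ^ I.card • altSum (y + 1) (consExchange M s I) := by
  have hI (I : Finset (Fin r)) := hasFiniteSupport_altTerm_consShift ((-qq ^ (-2 : ℤ)) ^ I.card)
    (y + 1) (consExchange M s I) I
  have hfin : (fun p : ℤ × (Fin r → ℤ) => qq ^ (-M - 2 * p.1) •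
      (hZF p.1 * bernsteinOp (-M - p.1) (altTerm y s p.2))).HasFiniteSupport := by
    refine (Set.finite_iUnion hI).subset fun p hp => ?_
    rw [Function.mem_support, smul_hZF_mul_bernsteinOp_altTerm] at hp
    obtain ⟨I, -, h⟩ := Finset.exists_ne_zero_of_sum_ne_zero (right_ne_zero_of_smul hp)
    exact Set.mem_iUnion.mpr ⟨I, h⟩
  calc current M (altSum y s)
      = ∑ᶠ (a : ℤ) (b : Fin r → ℤ),
          qq ^ (-M - 2 * a) • (hZF a * bernsteinOp (-M - a) (altTerm y s b)) := by
        rw [current_eq_finsum]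
        exact finsum_congr fun a => (qq ^ (-M - 2 * a) • LinearMap.mulLeft Fq (hZF a) ∘ₗ
          bernsteinOp (-M - a)).toAddMonoidHom.map_finsum (hasFiniteSupport_altTerm y s)
    _ = ∑ᶠ p : ℤ × (Fin r → ℤ), qq ^ (-M) • ∑ I : Finset (Fin r),
          (-qq ^ (-2 : ℤ)) ^ I.card • altTerm (y + 1) (consExchange M s I) (consShift I p) := by
        rw [← finsum_curry _ hfin]
        exact finsum_congr (smul_hZF_mul_bernsteinOp_altTerm M y s)
    _ = _ := by
        rw [← smul_finsum, finsum_sum_comm _ _ fun I _ => hI I]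
        simp only [← smul_finsum, finsum_comp_equiv, altSum]

theorem current_altSum_stair (M : ℤ) (y : Fin l → ℤ) :
    current M (altSum (r := r) y (stair (M - 2))) =
      (qq ^ (-M) * ∑ k ∈ Finset.range (r + 1), (qq ^ (-2 : ℤ)) ^ k) •
        altSum (y + 1) (stair M : Fin (r + 1) → ℤ) := by
  rw [current_altSum, (isAlternating_altSum (y + 1)).sum_powerset_consExchange, smul_smul]

end AlternatingSum

section QFactorial

theorem qq_pow_ne_one {k : ℕ} (hk : k ≠ 0) : qq ^ k ≠ 1 := by
  intro h
  rw [qq, ← RatFunc.algebraMap_X, ← map_pow, ← map_one (algebraMap (Polynomial ℚ) Fq)] at h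
  have := congrArg Polynomial.natDegree (RatFunc.algebraMap_injective ℚ h)
  rw [Polynomial.natDegree_X_pow, Polynomial.natDegree_one] at this
  exact hk this

theorem qq_pow_sub_inv_pow_ne_zero {k : ℕ} (hk : k ≠ 0) : qq ^ k - qq⁻¹ ^ k ≠ 0 := by
  intro h
  have hinv : qq ^ k * qq⁻¹ ^ k = 1 := by rw [← mul_pow, mul_inv_cancel₀ qq_ne_zero, one_pow]
  rw [← sub_eq_zero.mp h, ← pow_add] at hinv
  exact qq_pow_ne_one (by omega) hinv

theorem qq_sub_inv_ne_zero : qq - qq⁻¹ ≠ 0 := by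
  simpa only [pow_one] using qq_pow_sub_inv_pow_ne_zero one_ne_zero

theorem qfact_ne_zero (r : ℕ) : qfact r ≠ 0 :=
  Finset.prod_ne_zero_iff.mpr fun k _ =>
    div_ne_zero (qq_pow_sub_inv_pow_ne_zero k.succ_ne_zero) qq_sub_inv_ne_zero

theorem qfact_succ (r : ℕ) :
    qfact (r + 1) = qq ^ r * (∑ k ∈ Finset.range (r + 1), (qq ^ (-2 : ℤ)) ^ k) * qfact r := by
  have hq := qq_ne_zero
  have hgeom := Commute.geom_sum₂_mul (Commute.all qq qq⁻¹) (r + 1)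
  have hsum : ∑ k ∈ Finset.range (r + 1), qq ^ k * qq⁻¹ ^ (r + 1 - 1 - k) =
      qq ^ r * ∑ k ∈ Finset.range (r + 1), (qq ^ (-2 : ℤ)) ^ k := by
    rw [← Finset.sum_range_reflect, Finset.mul_sum]
    refine Finset.sum_congr rfl fun k hk => ?_
    obtain ⟨j, rfl⟩ := Nat.exists_eq_add_of_le (Nat.le_of_lt_succ (Finset.mem_range.mp hk))
    have hj : k + j + 1 - 1 - k = j := by omega
    have hk' : k + j + 1 - 1 - j = k := by omega
    rw [hj, hk', pow_add, zpow_neg, inv_pow, inv_pow, zpow_ofNat]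
    field_simp
    exact pow_right_comm _ _ _
  rw [qfact, qfact, Finset.prod_range_succ, ← hgeom, hsum,
    mul_div_cancel_right₀ _ qq_sub_inv_ne_zero, mul_comm]

end QFactorial

section Iteration

theorem iterate_Xp_single_detH {l : ℕ} (i n m : ℤ) (y : Fin l → ℤ) (r : ℕ) :
    (Xp i n)^[r] (Finsupp.single m (detH y)) = Finsupp.single (m + r)
      ((qq ^ (-3 * ((r : ℤ) * ((r : ℤ) - 1) / 2) - r * (n + 1 + 2 * m + i)) * qfact r) •
        altSum (r := r) (y + (r : Fin l → ℤ)) (stair (n + 1 + 2 * m + i + 2 * (r - 1)))) := by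
  induction r with
  | zero => simp [altSum_zero, qfact]
  | succ r ih =>
    have hdiv : ((r + 1 : ℕ) : ℤ) * (((r + 1 : ℕ) : ℤ) - 1) / 2 = (r : ℤ) * (r - 1) / 2 + r := by
      rw [← Int.add_mul_ediv_right _ _ two_ne_zero]
      push_cast
      ring_nf
    have hindex : n + 1 + 2 * (m + r) + i = n + 1 + 2 * m + i + 2 * r := by ring
    rw [Function.iterate_succ_apply', ih, Xp_single, hindex, hdiv]
    generalize n + 1 + 2 * m + i = N
    rw [show N + 2 * ((r : ℤ) - 1) = N + 2 * r - 2 by ring, map_smul, current_altSum_stair,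
      smul_smul, qfact_succ]
    push_cast
    rw [add_sub_cancel_right, ← add_assoc, ← add_assoc]
    congr 2
    rw [show -3 * ((r : ℤ) * (r - 1) / 2) - r * N =
      (-3 * ((r : ℤ) * (r - 1) / 2 + r) - (r + 1) * N) + r + (N + 2 * r) by ring,
      zpow_add₀ qq_ne_zero, zpow_add₀ qq_ne_zero, zpow_natCast, zpow_neg]
    have := zpow_ne_zero (N + 2 * r) qq_ne_zero
    field_simp

end Iteration

section Symmetrization

theorem schurF_eq_zero_of_antitone {r : ℕ} {ρ : Fin r → ℤ} (hanti : Antitone ρ) {k : Fin r}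
    (hk : ρ k < 0) : schurF ρ = 0 := by
  cases r with
  | zero => exact k.elim0
  | succ r =>
    refine Matrix.det_eq_zero_of_row_eq_zero (Fin.last r) fun j => hZF_of_neg ?_
    have hlast : ρ (Fin.last r) < 0 := (hanti (Fin.le_last k)).trans_lt hk
    have := j.le_last
    rw [Fin.le_def, Fin.val_last] at this
    rw [Fin.val_last]
    omega

theorem finsum_eq_finsum_natCast {ι M : Type*} [AddCommMonoid M] {f : (ι → ℤ) → M}
    (hf : ∀ x, f x ≠ 0 → 0 ≤ x) : ∑ᶠ x, f x = ∑ᶠ x : ι → ℕ, f fun k => x k := by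
  have hinj : Function.Injective fun (x : ι → ℕ) k => (x k : ℤ) :=
    Nat.cast_injective.comp_left
  rw [← finsum_mem_univ, finsum_mem_inter_support_eq' _ Set.univ
    (Set.range fun (x : ι → ℕ) k => (x k : ℤ)) fun x hx => iff_of_true (Set.mem_univ x) ?_,
    finsum_mem_range hinj]
  exact ⟨fun k => (x k).toNat, funext fun k => Int.toNat_of_nonneg (hf x hx k)⟩

theorem sum_sign_smul_scaledH {r : ℕ} (M : ℤ) (ρ : Fin r → ℤ) :
    ∑ σ : Equiv.Perm (Fin r), Equiv.Perm.sign σ • scaledH ((ρ + stair M) ∘ σ - stair M) =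
      qq ^ (-2 * ∑ k, ρ k) • schurF ρ := by
  rw [schurF, Matrix.det_apply, Finset.smul_sum]
  refine Finset.sum_congr rfl fun σ _ => ?_
  have hsum : ∑ k, ((ρ + stair M) ∘ σ - stair M : Fin r → ℤ) k = ∑ k, ρ k := by
    simp only [Pi.sub_apply, Function.comp_apply, Finset.sum_sub_distrib,
      Equiv.sum_comp σ fun k => (ρ + stair M : Fin r → ℤ) k]
    simp [Finset.sum_add_distrib]
  have hentry (k : Fin r) :
      ((ρ + stair M) ∘ σ - stair M : Fin r → ℤ) k = ρ (σ k) - (σ k : ℕ) + (k : ℕ) := by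
    simp only [Pi.sub_apply, Function.comp_apply, Pi.add_apply, stair]
    ring
  rw [scaledH, hsum, smul_comm]
  simp only [hentry, Matrix.of_apply]

/-- The orbit sum of the coefficients over the rearrangements of `ρ + stair M` is the Leibniz
expansion of `schurF ρ`. -/
theorem altSum_stair {l r : ℕ} (y : Fin l → ℤ) (M : ℤ) :
    altSum (r := r) y (stair M) = ∑ᶠ (lam : Fin r → ℕ) (_ : Antitone lam),
      qq ^ (-2 * ((∑ k, lam k : ℕ) : ℤ)) •
        (schurF (fun k => (lam k : ℤ)) *
          detH (Fin.append ((fun k => (lam k : ℤ)) + stair M) y)) := by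
  have hfin : (fun d : Fin r → ℤ =>
      scaledH (d - stair M) • detH (Fin.append d y)).HasFiniteSupport := by
    refine ((hasFiniteSupport_altTerm y (stair M)).preimage
      (Equiv.subRight (stair (r := r) M)).injective.injOn).subset fun d hd => ?_
    simpa [altTerm] using hd
  calc altSum y (stair M)
      = ∑ᶠ d : Fin r → ℤ, scaledH (d - stair M) • detH (Fin.append d y) := by
        rw [altSum, eq_comm, ← finsum_comp_equiv (Equiv.addRight (stair M))]
        simp only [altTerm, Equiv.coe_addRight, add_sub_cancel_right, smul_eq_mul]
    _ = ∑ᶠ (d : Fin r → ℤ) (_ : StrictAnti d), (∑ σ : Equiv.Perm (Fin r),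
          Equiv.Perm.sign σ • scaledH (d ∘ σ - stair M)) • detH (Fin.append d y) :=
        (isAlternating_detH.append_right y).finsum_smul_eq hfin
    _ = ∑ᶠ (ρ : Fin r → ℤ) (_ : Antitone ρ),
          qq ^ (-2 * ∑ k, ρ k) • (schurF ρ * detH (Fin.append (ρ + stair M) y)) := by
        rw [← finsum_comp_equiv (Equiv.addRight (stair M))]
        simp only [Equiv.coe_addRight, strictAnti_iff_antitone_sub_stair M, add_sub_cancel_right,
          sum_sign_smul_scaledH, smul_mul_assoc, smul_eq_mul]
    _ = _ := by
        rw [finsum_eq_finsum_natCast]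
        · refine finsum_congr fun lam => finsum_congr_Prop (by simp [Antitone]) fun _ => ?_
          push_cast
          rfl
        · intro ρ hρ k
          by_contra hk
          refine hρ ((finsum_congr fun hanti => ?_).trans finsum_zero)
          rw [schurF_eq_zero_of_antitone hanti (not_le.mp hk), zero_mul, smul_zero]

end Symmetrization

theorem divided_power_Xplus_on_schur_general (r : ℕ) (n m i : ℤ) {l : ℕ} (μ : Fin l → ℤ) :
    divpow (Xp i n) r (Finsupp.single m (schurF μ)) = Finsupp.single (m + r)
      (qq ^ (-3 * ((r : ℤ) * ((r : ℤ) - 1) / 2) - r * (n + 1 + 2 * m + i)) •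
        ∑ᶠ (lam : Fin r → ℕ) (_ : Antitone lam), qq ^ (-2 * ((∑ k, lam k : ℕ) : ℤ)) •
          (schurF (fun k => (lam k : ℤ)) * schurF (Fin.append
            (fun k : Fin r => -(lam k : ℤ) - 2 * ((r : ℤ) - 1 - (k : ℤ)) - (n + 1 + 2 * m + i))
            μ))) := by
  rw [divpow, ← detH_sub, iterate_Xp_single_detH, altSum_stair, Finsupp.smul_single, smul_smul,
    mul_left_comm, inv_mul_cancel₀ (qfact_ne_zero r), mul_one]
  refine congrArg _ (congrArg _ (finsum_congr fun lam => finsum_congr fun _ => ?_))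
  rw [← detH_sub (Fin.append _ μ)]
  congr 3
  funext k
  refine Fin.addCases (fun k => ?_) (fun k => ?_) k
  · simp only [Fin.append_left, Fin.val_castAdd, Pi.add_apply, stair]
    ring
  · simp only [Fin.append_right, Fin.val_natAdd, Pi.add_apply, Pi.natCast_apply]
    push_cast
    ring

/-- divided powers of `X_n^+` on the Schur basis.  For `r ≥ 1`,
`n, m ∈ ℤ`, `i ∈ {0,1}` and a partition `μ = (μ₁,…,μ_l)`:
`X_n^{+(r)} (s_μ e^{mα}e^{iα/2})
  = q^{−3r(r−1)/2 − r(n+1+2m+i)} ∑_λ q^{−2|λ|} · s_λ · s_{(ν(λ),μ)} · e^{(m+r)α}e^{iα/2}`,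
the sum over partitions `λ` with at most `r` parts (weakly decreasing tuples in `ℕ^r`;
all but finitely many summands vanish), where
`ν(λ)_k := −λ_k − 2(r−k) − (n+1+2m+i)` (`k = 1,…,r`). -/
theorem divided_power_Xplus_on_schur (r : ℕ) (hr : 1 ≤ r) (n m i : ℤ)
    (hi : i = 0 ∨ i = 1) (l : ℕ) (mu : Fin l → ℕ) (hmu : Antitone mu) :
    divpow (Xp i n) r (Finsupp.single m (schurF fun k => (mu k : ℤ)))
      = Finsupp.single (m + r)
          (qq ^ (-3 * ((r : ℤ) * ((r : ℤ) - 1) / 2) - r * (n + 1 + 2*m + i)) •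
            ∑ᶠ (lam : Fin r → ℕ) (_ : Antitone lam),
              qq ^ (-2 * ((∑ k, lam k : ℕ) : ℤ)) •
                (schurF (fun k => (lam k : ℤ)) *
                  schurF (Fin.append
                    (fun k : Fin r => -(lam k : ℤ) - 2*((r : ℤ) - 1 - (k.1 : ℤ))
                      - (n + 1 + 2*m + i))
                    (fun k => (mu k : ℤ))))) := by
  exact divided_power_Xplus_on_schur_general r n m i fun k => mu k
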